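/- Fix an integer r ≥ 2. For each n let H_n be an (r+1)-graph on n vertices with maximum r-degree at most d_n and independence number at most α_n ≥ r, and let p_n ∈ [0,1] and b_n > 0 satisfy: p_n·n → ∞; (p_n·d_n²·α_n^{2r}) / ((n·b_n² + d_n·b_n·α_n^r)·α_n·log n) → ∞; and d_n³·n^{3r−3}·p_n^{3r}/(p_n·n) → 0, as n → ∞. Then for every ε > 0 there exists n₀ such that for all n ≥ n₀ there is a set Y of vertices of H_n with: (i) |Y| ≥ (1−ε)·p_n·n; (ii) the induced subgraph H_n[Y] is linear and triangle-free; and (iii) every independent set Z of H_n[Y] satisfies h(Z, b_n) ≤ (1+ε)·p_n·d_n·C(α_n, r), where h is computed in H_n[Y]. -/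

import Mathlib

open Finset
open scoped Classical

/-- `Z` is an independent set of the hypergraph `H`: it contains no edge. -/
def IsIndep {V : Type*} [DecidableEq V] (H : Finset (Finset V)) (Z : Finset V) : Prop :=
  ∀ e ∈ H, ¬ e ⊆ Z

/-- The independence number of a hypergraph on a finite vertex type. -/
noncomputable def indepNum {V : Type*} [Fintype V] [DecidableEq V]
    (H : Finset (Finset V)) : ℕ :=
  ((Finset.univ : Finset V).powerset.filter (fun Z => IsIndep H Z)).sup Finset.card

/-- `H` has maximum `r`-degree at most `d`: every `r`-element vertex set is
contained in at most `d` edges. -/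
def maxDegLe {V : Type*} [DecidableEq V] (r : ℕ) (H : Finset (Finset V)) (d : ℕ) : Prop :=
  ∀ S : Finset V, S.card = r → (H.filter (fun e => S ⊆ e)).card ≤ d

/-- `H` is linear: no two distinct edges share two or more vertices. -/
def Linear {V : Type*} [DecidableEq V] (H : Finset (Finset V)) : Prop :=
  ∀ e ∈ H, ∀ f ∈ H, e ≠ f → (e ∩ f).card ≤ 1

/-- `H` is triangle-free: there are no three distinct edges `e, f, g` with
`|e∩f| = |f∩g| = |g∩e| = 1` and `e∩f∩g = ∅`. -/
def TriangleFree {V : Type*} [DecidableEq V] (H : Finset (Finset V)) : Prop :=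
  ¬ ∃ e ∈ H, ∃ f ∈ H, ∃ g ∈ H, e ≠ f ∧ f ≠ g ∧ e ≠ g ∧
      (e ∩ f).card = 1 ∧ (f ∩ g).card = 1 ∧ (g ∩ e).card = 1 ∧ e ∩ f ∩ g = ∅

/-!
Let `X` contain each of the `N` vertices independently with probability `p`. Two edges sharing at
least two vertices, and three edges forming a triangle, arise by attaching edges one at a time, so
with `Q = d p (pN)^(r-1)` the expected numbers of such configurations inside `X` are `O(Q²)` and
`O(Q³)`, which is `o(pN)`. Deleting one vertex from each of them therefore costs few vertices and
leaves a linear and triangle-free hypergraph. For a fixed `Z` with at most `α` vertices, `h(Z, b)/b`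
computed with the vertex set `X` is a sum of independent variables in `[0, 1]` with mean at most
`p d C(α, r)/b`. By Chernoff it exceeds `1 + ε` times this value with probability
`exp(-Ω(p d α^r/b))`, which beats the `(N + 1)^α` choices of `Z`. Deletion only decreases `h(Z, b)`,
and an independent set of `H[Y]` is independent in `H`, hence is one of these `Z`.
-/

section RandomSubset

open MeasureTheory ProbabilityTheory unitInterval

variable {V : Type*} (p : I)

lemma exists_finset_of_setBernoulli_real_lt_one [Fintype V] {E : Finset V → Prop}
    (hE : setBer(Set.univ, p).real {s | E s.toFinset} < 1) : ∃ X, ¬ E X := by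
  by_contra! hall
  have huniv : {s : Set V | E s.toFinset} = Set.univ := Set.eq_univ_of_forall fun s => hall _
  rw [huniv, probReal_univ] at hE
  exact hE.false

lemma integral_setBernoulli_univ [Fintype V] (F : Set V → ℝ) :
    ∫ s, F s ∂setBer(Set.univ, p)
      = ∑ X : Finset V, (p : ℝ) ^ #X * (1 - p : ℝ) ^ #Xᶜ * F X := by
  rw [integral_fintype .of_finite, ← Fintype.finsetEquivSet.sum_comp]
  refine Finset.sum_congr rfl fun X _ => ?_
  rw [Fintype.coe_finsetEquivSet, setBernoulli_real_singleton p (Set.subset_univ _) Set.finite_univ,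
    ← Set.compl_eq_univ_sdiff, ← Finset.coe_compl, Set.ncard_coe_finset, Set.ncard_coe_finset,
    smul_eq_mul]

lemma integral_setBernoulli_prod_ite [Fintype V] (f g : V → ℝ) :
    ∫ s, ∏ v, (if v ∈ s then f v else g v) ∂setBer(Set.univ, p)
      = ∏ v, (p * f v + (1 - p) * g v) := by
  rw [integral_setBernoulli_univ, Fintype.prod_add]
  refine Finset.sum_congr rfl fun X _ => ?_
  simp only [Finset.prod_mul_distrib, Finset.prod_const, Finset.mem_coe, Finset.prod_ite,
    Finset.filter_univ_mem, Finset.filter_notMem_eq_sdiff, ← Finset.compl_eq_univ_sdiff]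
  ring

lemma setBernoulli_real_superset [Finite V] (S : Finset V) :
    setBer(Set.univ, p).real {s | (S : Set V) ⊆ s} = (p : ℝ) ^ #S := by
  cases nonempty_fintype V
  have hind : ∀ s : Set V, {s : Set V | (S : Set V) ⊆ s}.indicator (1 : Set V → ℝ) s
      = ∏ v, if v ∈ s then 1 else if v ∈ S then 0 else 1 := by
    intro s
    by_cases hs : (S : Set V) ⊆ s
    · rw [Set.indicator_of_mem (by exact hs), Finset.prod_eq_one]
      · rfl
      intro v _
      split_ifs with hvs hvS
      exacts [rfl, absurd (hs hvS) hvs, rfl]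
    · obtain ⟨v, hvS, hvs⟩ := Set.not_subset.1 hs
      rw [Set.indicator_of_notMem (by exact hs),
        Finset.prod_eq_zero (Finset.mem_univ v) (by simp [hvs, Finset.mem_coe.1 hvS])]
  rw [← integral_indicator_one .of_discrete, integral_congr_ae (.of_forall hind),
    integral_setBernoulli_prod_ite]
  have hfactor : ∀ v, (p * 1 + (1 - p) * if v ∈ S then 0 else 1 : ℝ)
      = if v ∈ S then (p : ℝ) else 1 := by
    intro v
    split_ifs <;> ring
  simp only [hfactor, Finset.prod_ite_mem, Finset.univ_inter, Finset.prod_const]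

lemma integral_card_filter_subset [Fintype V] [DecidableEq V] (𝓑 : Finset (Finset V)) :
    ∫ s, (#{B ∈ 𝓑 | B ⊆ s.toFinset} : ℝ) ∂setBer(Set.univ, p) = ∑ B ∈ 𝓑, (p : ℝ) ^ #B := by
  have hind : ∀ s : Set V, (#{B ∈ 𝓑 | B ⊆ s.toFinset} : ℝ)
      = ∑ B ∈ 𝓑, {s : Set V | (B : Set V) ⊆ s}.indicator (1 : Set V → ℝ) s := by
    intro s
    simp [Set.indicator_apply, Set.subset_toFinset]
  simp only [hind]
  rw [integral_finsetSum _ fun _ _ => .of_finite]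
  simp only [integral_indicator_one (MeasurableSet.of_discrete), setBernoulli_real_superset]

lemma setBernoulli_real_le_card_filter_subset [Fintype V] [DecidableEq V]
    (𝓑 : Finset (Finset V)) {t : ℝ} (ht : 0 < t) :
    setBer(Set.univ, p).real {s | t ≤ #{B ∈ 𝓑 | B ⊆ s.toFinset}}
      ≤ (∑ B ∈ 𝓑, (p : ℝ) ^ #B) / t := by
  rw [le_div_iff₀' ht, ← integral_card_filter_subset]
  exact mul_meas_ge_le_integral_of_nonneg (.of_forall fun s => Nat.cast_nonneg _) .of_finite t

lemma mgf_sum_mem_setBernoulli [Fintype V] (c : V → ℝ) (t : ℝ) :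
    mgf (fun s => ∑ v ∈ s.toFinset, c v) setBer(Set.univ, p) t
      = ∏ v, (p * Real.exp (t * c v) + (1 - p)) := by
  have hexp : ∀ s : Set V, Real.exp (t * ∑ v ∈ s.toFinset, c v)
      = ∏ v, if v ∈ s then Real.exp (t * c v) else 1 := by
    intro s
    rw [Finset.mul_sum, Real.exp_sum, ← Set.filter_mem_univ_eq_toFinset, Finset.prod_filter]
  simp only [mgf, hexp, integral_setBernoulli_prod_ite, mul_one]

lemma exp_mul_le_of_mem_Icc {t x : ℝ} (ht : |t| ≤ 1) (hx : x ∈ Set.Icc (0 : ℝ) 1) :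
    Real.exp (t * x) ≤ 1 + x * (t + t ^ 2) := by
  have hchord : Real.exp (t * x) ≤ 1 + x * (Real.exp t - 1) := by
    have := convexOn_exp.2 (Set.mem_univ 0) (Set.mem_univ t) (sub_nonneg.2 hx.2) hx.1 (by ring)
    simp only [smul_eq_mul, mul_zero, zero_add, Real.exp_zero, mul_one] at this
    rw [mul_comm t]
    linarith
  have hquad : Real.exp t - 1 ≤ t + t ^ 2 := by
    linarith [(abs_le.1 (Real.abs_exp_sub_one_sub_id_le ht)).2]
  linarith [mul_le_mul_of_nonneg_left hquad hx.1]

lemma mgf_sum_mem_setBernoulli_le [Fintype V] {c : V → ℝ}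
    (hc : ∀ v, c v ∈ Set.Icc (0 : ℝ) 1) {t : ℝ} (ht : |t| ≤ 1) :
    mgf (fun s => ∑ v ∈ s.toFinset, c v) setBer(Set.univ, p) t
      ≤ Real.exp ((t + t ^ 2) * (p * ∑ v, c v)) := by
  rw [mgf_sum_mem_setBernoulli, Finset.mul_sum, Finset.mul_sum, Real.exp_sum]
  refine Finset.prod_le_prod (fun v _ => ?_) fun v _ => ?_
  · exact add_nonneg (mul_nonneg p.2.1 (Real.exp_nonneg _)) (sub_nonneg.2 p.2.2)
  · calc p * Real.exp (t * c v) + (1 - p)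
        ≤ p * (1 + c v * (t + t ^ 2)) + (1 - p) := by
          gcongr
          exacts [p.2.1, exp_mul_le_of_mem_Icc ht (hc v)]
      _ = (t + t ^ 2) * (p * c v) + 1 := by ring
      _ ≤ Real.exp ((t + t ^ 2) * (p * c v)) := Real.add_one_le_exp _

variable [Fintype V] {c : V → ℝ} (hc : ∀ v, c v ∈ Set.Icc (0 : ℝ) 1)
  {δ M : ℝ} (hδ : δ ∈ Set.Icc (0 : ℝ) 2)
include hc hδ

lemma setBernoulli_real_one_add_mul_le_sum_le (hM : p * ∑ v, c v ≤ M) :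
    setBer(Set.univ, p).real {s | (1 + δ) * M ≤ ∑ v ∈ s.toFinset, c v}
      ≤ Real.exp (-(δ ^ 2 / 4 * M)) := by
  obtain ⟨hδ₀, hδ₂⟩ := hδ
  have ht : |δ / 2| ≤ 1 := by rw [abs_of_nonneg (by linarith)]; linarith
  calc _ ≤ Real.exp (-(δ / 2) * ((1 + δ) * M))
          * mgf (fun s => ∑ v ∈ s.toFinset, c v) setBer(Set.univ, p) (δ / 2) :=
        measure_ge_le_exp_mul_mgf _ (by linarith) .of_finite
    _ ≤ Real.exp (-(δ / 2) * ((1 + δ) * M)) * Real.exp ((δ / 2 + (δ / 2) ^ 2) * M) := by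
        gcongr
        refine (mgf_sum_mem_setBernoulli_le p hc ht).trans ?_
        gcongr
    _ = Real.exp (-(δ ^ 2 / 4 * M)) := by rw [← Real.exp_add]; ring_nf

lemma setBernoulli_real_sum_le_one_sub_mul_le (hM : M ≤ p * ∑ v, c v) :
    setBer(Set.univ, p).real {s | ∑ v ∈ s.toFinset, c v ≤ (1 - δ) * M}
      ≤ Real.exp (-(δ ^ 2 / 4 * M)) := by
  obtain ⟨hδ₀, hδ₂⟩ := hδ
  have ht : |-(δ / 2)| ≤ 1 := by rw [abs_neg, abs_of_nonneg (by linarith)]; linarith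
  have hslope : -(δ / 2) + (-(δ / 2)) ^ 2 ≤ 0 := by nlinarith
  calc _ ≤ Real.exp (- -(δ / 2) * ((1 - δ) * M))
          * mgf (fun s => ∑ v ∈ s.toFinset, c v) setBer(Set.univ, p) (-(δ / 2)) :=
        measure_le_le_exp_mul_mgf _ (by linarith) .of_finite
    _ ≤ Real.exp (- -(δ / 2) * ((1 - δ) * M))
          * Real.exp ((-(δ / 2) + (-(δ / 2)) ^ 2) * M) := by
        gcongr
        refine (mgf_sum_mem_setBernoulli_le p hc ht).trans (Real.exp_le_exp.2 ?_)
        exact mul_le_mul_of_nonpos_left hM hslope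
    _ = Real.exp (-(δ ^ 2 / 4 * M)) := by rw [← Real.exp_add]; ring_nf

end RandomSubset

section EdgeExtensions

variable {V : Type*} [DecidableEq V]

lemma exists_subset_forall_not_subset {𝓑 : Finset (Finset V)} (h𝓑 : ∀ B ∈ 𝓑, B.Nonempty)
    (X : Finset V) :
    ∃ Y ⊆ X, #X ≤ #Y + #{B ∈ 𝓑 | B ⊆ X} ∧ ∀ B ∈ 𝓑, ¬ B ⊆ Y := by
  choose φ hφ using h𝓑
  let pick (B : {B // B ∈ 𝓑.filter (· ⊆ X)}) : V := φ B (mem_filter.1 B.2).1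
  set D := univ.image pick
  have hDcard : #D ≤ #{B ∈ 𝓑 | B ⊆ X} := card_image_le.trans_eq (Fintype.card_coe _)
  refine ⟨X \ D, sdiff_subset, ?_, fun B hB hBY => ?_⟩
  · have := card_le_card_sdiff_add_card (s := X) (t := D)
    omega
  · have hBX : B ∈ 𝓑.filter (· ⊆ X) := mem_filter.2 ⟨hB, hBY.trans sdiff_subset⟩
    exact (mem_sdiff.1 (hBY (hφ B hB))).2 (mem_image_of_mem pick (mem_univ ⟨B, hBX⟩))

/-- The sets `A ∪ g` obtained by attaching to a member `A` of `𝓐` an edge `g` of `H` that meets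
`A` in at least `s` and at most `t` vertices. Iterating this operation produces the vertex sets of
the configurations that have to be destroyed in order to make `H` linear and triangle-free. -/
def edgeExtensions (H : Finset (Finset V)) (s t : ℕ) (𝓐 : Finset (Finset V)) :
    Finset (Finset V) :=
  𝓐.biUnion fun A => {g ∈ H | #(g ∩ A) ∈ Icc s t}.image fun g => A ∪ g

variable {H 𝓐 : Finset (Finset V)} {r s t d m : ℕ}

lemma mem_edgeExtensions {B : Finset V} :
    B ∈ edgeExtensions H s t 𝓐
      ↔ ∃ A ∈ 𝓐, ∃ g ∈ H, s ≤ #(g ∩ A) ∧ #(g ∩ A) ≤ t ∧ A ∪ g = B := by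
  simp [edgeExtensions, and_assoc]

lemma nonempty_of_mem_edgeExtensions (hs : 0 < s) {B : Finset V}
    (hB : B ∈ edgeExtensions H s t 𝓐) : B.Nonempty := by
  obtain ⟨A, -, g, -, hsg, -, rfl⟩ := mem_edgeExtensions.1 hB
  exact (card_pos.1 (hs.trans_le hsg)).mono (inter_subset_right.trans subset_union_left)

lemma card_le_of_mem_edgeExtensions (hH : ∀ e ∈ H, #e = r + 1) (h𝓐 : ∀ A ∈ 𝓐, #A ≤ m)
    {B : Finset V} (hB : B ∈ edgeExtensions H s t 𝓐) : #B ≤ m + (r + 1) := by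
  obtain ⟨A, hA, g, hg, -, -, rfl⟩ := mem_edgeExtensions.1 hB
  exact (card_union_le A g).trans (add_le_add (h𝓐 A hA) (hH g hg).le)

lemma card_inter_le_of_ne (hH : ∀ e ∈ H, #e = r + 1) {e f : Finset V} (he : e ∈ H) (hf : f ∈ H)
    (hne : e ≠ f) : #(e ∩ f) ≤ r := by
  have hss : e ∩ f ⊂ e := inter_subset_left.ssubset_of_ne fun hef =>
    hne (eq_of_subset_of_card_le (inter_eq_left.1 hef) ((hH f hf).trans (hH e he).symm).le)
  exact Nat.lt_succ_iff.1 ((card_lt_card hss).trans_eq (hH e he))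

lemma linear_filter_subset (hH : ∀ e ∈ H, #e = r + 1) {Y : Finset V}
    (hY : ∀ B ∈ edgeExtensions H 2 r H, ¬ B ⊆ Y) : Linear (H.filter fun e => e ⊆ Y) := by
  intro e he f hf hne
  rw [mem_filter] at he hf
  by_contra! hcard
  exact hY (f ∪ e) (mem_edgeExtensions.2
    ⟨f, hf.1, e, he.1, hcard, card_inter_le_of_ne hH he.1 hf.1 hne, rfl⟩)
    (union_subset hf.2 he.2)

lemma triangleFree_filter_subset (hr : 2 ≤ r) {Y : Finset V}
    (hY : ∀ B ∈ edgeExtensions H 2 r (edgeExtensions H 1 r H), ¬ B ⊆ Y) :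
    TriangleFree (H.filter fun e => e ⊆ Y) := by
  rintro ⟨e, he, f, hf, g, hg, -, -, -, hef, hfg, hge, hefg⟩
  rw [mem_filter] at he hf hg
  have hdisj : Disjoint (g ∩ e) (g ∩ f) := by
    rw [disjoint_iff_inter_eq_empty, ← hefg]
    grind
  have hcard : #(g ∩ (e ∪ f)) = 2 := by
    rw [inter_union_distrib_left, card_union_of_disjoint hdisj, hge, inter_comm g f, hfg]
  have hef_mem : e ∪ f ∈ edgeExtensions H 1 r H :=
    mem_edgeExtensions.2 ⟨e, he.1, f, hf.1, by rw [inter_comm, hef],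
      by rw [inter_comm, hef]; omega, rfl⟩
  exact hY (e ∪ f ∪ g)
    (mem_edgeExtensions.2 ⟨_, hef_mem, g, hg.1, hcard.ge, hcard.trans_le hr, rfl⟩)
    (union_subset (union_subset he.2 hf.2) hg.2)

variable [Fintype V] (hH : ∀ e ∈ H, #e = r + 1) (hdeg : maxDegLe r H d)
include hH hdeg

lemma card_filter_superset_le {T : Finset V} (hT : #T ≤ r) :
    #{e ∈ H | T ⊆ e} ≤ Fintype.card V ^ (r - #T) * d := by
  set 𝓡 := (univ.powersetCard (r - #T)).filter fun R : Finset V => #(T ∪ R) = r with h𝓡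
  have hcover : {e ∈ H | T ⊆ e} ⊆ 𝓡.biUnion fun R => {e ∈ H | T ∪ R ⊆ e} := by
    intro e he
    obtain ⟨heH, hTe⟩ := mem_filter.1 he
    have hcard : r - #T ≤ #(e \ T) := by
      rw [card_sdiff_of_subset hTe, hH e heH]
      omega
    obtain ⟨R, hRe, hR⟩ := exists_subset_card_eq hcard
    have hTR : #(T ∪ R) = r := by
      rw [card_union_of_disjoint (disjoint_sdiff.mono_right hRe)]
      omega
    simp only [h𝓡, mem_biUnion, mem_filter, mem_powersetCard_univ]
    exact ⟨R, ⟨hR, hTR⟩, heH, union_subset hTe (hRe.trans sdiff_subset)⟩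
  calc #{e ∈ H | T ⊆ e}
      ≤ #𝓡 * d :=
        (card_le_card hcover).trans
          (card_biUnion_le_card_mul _ _ d fun R hR => hdeg _ (mem_filter.1 hR).2)
    _ ≤ Fintype.card V ^ (r - #T) * d := by
        gcongr
        refine (card_filter_le _ _).trans ?_
        rw [card_powersetCard, card_univ]
        exact Nat.choose_le_pow _ _

variable {p : ℝ} (hp : 0 ≤ p) (hpV : 1 ≤ p * Fintype.card V)
include hp hpV

lemma sum_pow_card_union_le_of_inter_eq {T A : Finset V} (hsT : s ≤ #T) (hTr : #T ≤ r) :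
    ∑ g ∈ H with g ∩ A = T, p ^ #(A ∪ g)
      ≤ d * p * (p * Fintype.card V) ^ (r - s) * p ^ #A := by
  have hpow : ∀ g ∈ H.filter (· ∩ A = T), p ^ #(A ∪ g) = p ^ (r - #T + 1) * p ^ #A := by
    intro g hg
    obtain ⟨hgH, rfl⟩ := mem_filter.1 hg
    have := card_union_add_card_inter g A
    rw [← pow_add, union_comm]
    rw [hH g hgH] at this
    congr 1
    omega
  have hcount : (#(H.filter (· ∩ A = T)) : ℝ) ≤ Fintype.card V ^ (r - #T) * d := by
    have hsub : H.filter (· ∩ A = T) ⊆ {g ∈ H | T ⊆ g} :=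
      monotone_filter_right _ fun g _ hg => hg ▸ inter_subset_left
    exact_mod_cast (card_le_card hsub).trans (card_filter_superset_le hH hdeg hTr)
  calc ∑ g ∈ H with g ∩ A = T, p ^ #(A ∪ g)
      = #(H.filter (· ∩ A = T)) * (p ^ (r - #T + 1) * p ^ #A) := by
        rw [sum_congr rfl hpow, sum_const, nsmul_eq_mul]
    _ ≤ Fintype.card V ^ (r - #T) * d * (p ^ (r - #T + 1) * p ^ #A) := by gcongr
    _ = d * p * (p * Fintype.card V) ^ (r - #T) * p ^ #A := by ring
    _ ≤ d * p * (p * Fintype.card V) ^ (r - s) * p ^ #A := by gcongr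

lemma sum_pow_card_union_le (A : Finset V) :
    ∑ g ∈ H with #(g ∩ A) ∈ Icc s r, p ^ #(A ∪ g)
      ≤ 2 ^ #A * (d * p * (p * Fintype.card V) ^ (r - s)) * p ^ #A := by
  have htrace : ∀ g ∈ H.filter fun g => #(g ∩ A) ∈ Icc s r,
      g ∩ A ∈ {T ∈ A.powerset | #T ∈ Icc s r} := fun g hg =>
    mem_filter.2 ⟨mem_powerset.2 inter_subset_right, (mem_filter.1 hg).2⟩
  rw [← sum_fiberwise_of_maps_to htrace]
  calc _ ≤ ∑ T ∈ A.powerset with #T ∈ Icc s r,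
          d * p * (p * Fintype.card V) ^ (r - s) * p ^ #A := by
        refine sum_le_sum fun T hT => ?_
        obtain ⟨hsT, hTr⟩ := mem_Icc.1 (mem_filter.1 hT).2
        refine (sum_le_sum_of_subset_of_nonneg ?_ fun g _ _ => pow_nonneg hp _).trans
          (sum_pow_card_union_le_of_inter_eq hH hdeg hp hpV hsT hTr)
        exact filter_subset_filter _ (filter_subset _ _)
    _ ≤ ∑ _ ∈ A.powerset, d * p * (p * Fintype.card V) ^ (r - s) * p ^ #A :=
        sum_le_sum_of_subset_of_nonneg (filter_subset _ _) fun _ _ _ => by positivity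
    _ = _ := by
        rw [sum_const, card_powerset, nsmul_eq_mul]
        push_cast
        ring

lemma sum_pow_card_edgeExtensions_le (h𝓐 : ∀ A ∈ 𝓐, #A ≤ m) :
    ∑ B ∈ edgeExtensions H s r 𝓐, p ^ #B
      ≤ 2 ^ m * (d * p * (p * Fintype.card V) ^ (r - s)) * ∑ A ∈ 𝓐, p ^ #A := by
  set F : Finset (Σ _ : Finset V, Finset V) :=
    𝓐.sigma fun A => {g ∈ H | #(g ∩ A) ∈ Icc s r} with hF
  have himage : edgeExtensions H s r 𝓐 = F.image fun x => x.1 ∪ x.2 := by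
    ext B
    simp [mem_edgeExtensions, hF, and_assoc]
  calc ∑ B ∈ edgeExtensions H s r 𝓐, p ^ #B
      ≤ ∑ A ∈ 𝓐, ∑ g ∈ H with #(g ∩ A) ∈ Icc s r, p ^ #(A ∪ g) := by
        rw [himage, sum_sigma']
        exact sum_image_le_of_nonneg fun _ _ => pow_nonneg hp _
    _ ≤ ∑ A ∈ 𝓐, 2 ^ m * (d * p * (p * Fintype.card V) ^ (r - s)) * p ^ #A := by
        refine sum_le_sum fun A hA => (sum_pow_card_union_le hH hdeg hp hpV A).trans ?_
        gcongr
        exacts [one_le_two, h𝓐 A hA]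
    _ = _ := (mul_sum _ _ _).symm

lemma sum_pow_card_edges_le :
    ∑ e ∈ H, p ^ #e ≤ d * p * (p * Fintype.card V) ^ r := by
  simpa using sum_pow_card_union_le (s := 0) hH hdeg hp hpV ∅

variable (hr : 2 ≤ r)
include hr

lemma sum_pow_card_edgeExtensions_edges_le :
    ∑ B ∈ edgeExtensions H 2 r H, p ^ #B
      ≤ 2 ^ (r + 1) * (d * p * (p * Fintype.card V) ^ (r - 1)) ^ 2 := by
  obtain ⟨k, rfl⟩ := Nat.exists_eq_add_of_le' hr
  calc _ ≤ 2 ^ (k + 2 + 1) * (d * p * (p * Fintype.card V) ^ (k + 2 - 2))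
          * (d * p * (p * Fintype.card V) ^ (k + 2)) := by
        refine (sum_pow_card_edgeExtensions_le hH hdeg hp hpV fun e he => (hH e he).le).trans ?_
        gcongr
        exact sum_pow_card_edges_le hH hdeg hp hpV
    _ = _ := by
        rw [Nat.add_sub_cancel, show k + 2 - 1 = k + 1 from rfl]
        ring

lemma sum_pow_card_edgeExtensions_edgeExtensions_le :
    ∑ B ∈ edgeExtensions H 2 r (edgeExtensions H 1 r H), p ^ #B
      ≤ 2 ^ (3 * (r + 1)) * (d * p * (p * Fintype.card V) ^ (r - 1)) ^ 3 := by
  have hcard : ∀ e ∈ H, #e ≤ r + 1 := fun e he => (hH e he).le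
  obtain ⟨k, rfl⟩ := Nat.exists_eq_add_of_le' hr
  calc _ ≤ 2 ^ (k + 2 + 1 + (k + 2 + 1)) * (d * p * (p * Fintype.card V) ^ (k + 2 - 2))
          * (2 ^ (k + 2 + 1) * (d * p * (p * Fintype.card V) ^ (k + 2 - 1))
            * (d * p * (p * Fintype.card V) ^ (k + 2))) := by
        refine (sum_pow_card_edgeExtensions_le hH hdeg hp hpV
          fun A hA => card_le_of_mem_edgeExtensions hH hcard hA).trans ?_
        gcongr
        refine (sum_pow_card_edgeExtensions_le hH hdeg hp hpV hcard).trans ?_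
        gcongr
        exact sum_pow_card_edges_le hH hdeg hp hpV
    _ = _ := by
        rw [Nat.add_sub_cancel, show k + 2 - 1 = k + 1 from rfl]
        ring

end EdgeExtensions

section CappedDegreeSum

lemma card_filter_card_le {V : Type*} [Fintype V] (a : ℕ) :
    #{Z : Finset V | #Z ≤ a} ≤ (Fintype.card V + 1) ^ a := by
  have hcover : (univ.filter fun Z : Finset V => #Z ≤ a)
      ⊆ (range (a + 1)).biUnion fun k => univ.powersetCard k := by
    intro Z hZ
    simpa [Nat.lt_succ_iff] using hZ
  calc #{Z : Finset V | #Z ≤ a}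
      ≤ ∑ k ∈ range (a + 1), (Fintype.card V).choose k := by
        refine (card_le_card hcover).trans (card_biUnion_le.trans_eq ?_)
        simp only [card_powersetCard, card_univ]
    _ ≤ ∑ k ∈ range (a + 1), Fintype.card V ^ k * 1 ^ (a - k) * a.choose k := by
        refine sum_le_sum fun k hk => ?_
        rw [one_pow, mul_one]
        exact (Nat.choose_le_pow _ _).trans
          (Nat.le_mul_of_pos_right _ (Nat.choose_pos (Nat.lt_succ_iff.1 (mem_range.1 hk))))
    _ = (Fintype.card V + 1) ^ a := (add_pow _ 1 a).symm

variable {V : Type*} [DecidableEq V]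

/-- The number of `r`-subsets of `Z` that form an edge of `H` together with the vertex `v`. -/
def linkDegree (H : Finset (Finset V)) (r : ℕ) (Z : Finset V) (v : V) : ℕ :=
  #{e ∈ Z.powersetCard r | insert v e ∈ H}

/-- The paper's `h(Z, b)` for a hypergraph `H` whose vertex set is `Y`. The vertex set is an
argument because induced subgraphs are encoded by their edges alone. -/
noncomputable def cappedDegreeSum (H : Finset (Finset V)) (r : ℕ) (Y Z : Finset V) (b : ℝ) : ℝ :=
  ∑ v ∈ Y \ Z, min b (linkDegree H r Z v)

variable {H : Finset (Finset V)} {r d a : ℕ} {Z : Finset V} {b : ℝ}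

lemma cappedDegreeSum_mono {G : Finset (Finset V)} {X Y : Finset V} (hGH : G ⊆ H) (hYX : Y ⊆ X)
    (hb : 0 ≤ b) : cappedDegreeSum G r Y Z b ≤ cappedDegreeSum H r X Z b := by
  have hlink : ∀ v, linkDegree G r Z v ≤ linkDegree H r Z v := fun v =>
    card_le_card (monotone_filter_right _ fun _ _ he => hGH he)
  calc cappedDegreeSum G r Y Z b
      ≤ ∑ v ∈ Y \ Z, min b (linkDegree H r Z v) := by
        refine sum_le_sum fun v _ => min_le_min_left b ?_
        exact_mod_cast hlink v
    _ ≤ cappedDegreeSum H r X Z b :=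
        sum_le_sum_of_subset_of_nonneg (sdiff_subset_sdiff hYX subset_rfl)
          fun v _ _ => le_min hb (Nat.cast_nonneg _)

lemma IsIndep.of_filter_subset {Y : Finset V} (hZY : Z ⊆ Y)
    (hZ : IsIndep (H.filter fun e => e ⊆ Y) Z) : IsIndep H Z :=
  fun e he heZ => hZ e (mem_filter.2 ⟨he, heZ.trans hZY⟩) heZ

variable [Fintype V]

lemma IsIndep.card_le_indepNum (hZ : IsIndep H Z) : #Z ≤ indepNum H :=
  le_sup (f := card) (mem_filter.2 ⟨mem_powerset.2 (subset_univ Z), hZ⟩)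

lemma le_indepNum (hH : ∀ e ∈ H, #e = r + 1) (hr : r ≤ Fintype.card V) : r ≤ indepNum H := by
  obtain ⟨Z, -, hZ⟩ := exists_subset_card_eq (s := (univ : Finset V)) hr
  have hZ_indep : IsIndep H Z := fun e he heZ => by
    have := card_le_card heZ
    rw [hH e he] at this
    omega
  exact hZ.symm.trans_le hZ_indep.card_le_indepNum

lemma card_filter_insert_mem_le (hdeg : maxDegLe r H d) {e : Finset V} (he : #e = r) :
    #{v ∈ eᶜ | insert v e ∈ H} ≤ d := by
  refine (card_le_card_of_injOn (fun v => insert v e) ?_ ?_).trans (hdeg e he)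
  · intro v hv
    exact mem_filter.2 ⟨(mem_filter.1 hv).2, subset_insert v e⟩
  · exact fun v hv w _ hvw => (insert_inj (mem_compl.1 (mem_filter.1 hv).1)).1 hvw

lemma sum_linkDegree_le (hdeg : maxDegLe r H d) (Z : Finset V) :
    ∑ v ∈ Zᶜ, linkDegree H r Z v ≤ (#Z).choose r * d := by
  calc ∑ v ∈ Zᶜ, linkDegree H r Z v
      = ∑ e ∈ Z.powersetCard r, #{v ∈ Zᶜ | insert v e ∈ H} :=
        (sum_card_bipartiteAbove_eq_sum_card_bipartiteBelow fun e v => insert v e ∈ H).symm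
    _ ≤ #(Z.powersetCard r) • d := by
        refine sum_le_card_nsmul _ _ _ fun e he => ?_
        obtain ⟨heZ, hcard⟩ := mem_powersetCard.1 he
        exact (card_le_card (filter_subset_filter _ (compl_subset_compl.2 heZ))).trans
          (card_filter_insert_mem_le hdeg hcard)
    _ = (#Z).choose r * d := by rw [card_powersetCard, smul_eq_mul]

lemma sum_min_one_linkDegree_div_le (hdeg : maxDegLe r H d) (hb : 0 ≤ b) (hZ : #Z ≤ a) :
    ∑ v ∈ Zᶜ, min 1 (linkDegree H r Z v / b) ≤ d * a.choose r / b := by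
  calc ∑ v ∈ Zᶜ, min 1 (linkDegree H r Z v / b)
      ≤ ∑ v ∈ Zᶜ, linkDegree H r Z v / b := sum_le_sum fun v _ => min_le_right _ _
    _ = ((∑ v ∈ Zᶜ, linkDegree H r Z v : ℕ) : ℝ) / b := by rw [Nat.cast_sum, sum_div]
    _ ≤ d * a.choose r / b := by
        gcongr
        rw [mul_comm]
        exact_mod_cast (sum_linkDegree_le hdeg Z).trans
          (Nat.mul_le_mul_right d (Nat.choose_le_choose r hZ))

open MeasureTheory ProbabilityTheory unitInterval

variable (p : I) (hdeg : maxDegLe r H d) (hb : 0 < b) {δ : ℝ} (hδ : δ ∈ Set.Icc (0 : ℝ) 2)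
include hdeg hb hδ

lemma setBernoulli_real_le_cappedDegreeSum (hZ : #Z ≤ a) :
    setBer(Set.univ, p).real
        {s | (1 + δ) * (p * d * a.choose r) ≤ cappedDegreeSum H r s.toFinset Z b}
      ≤ Real.exp (-(δ ^ 2 / 4 * (p * d * a.choose r / b))) := by
  set c : V → ℝ := fun v => if v ∈ Z then 0 else min 1 (linkDegree H r Z v / b) with hc
  have hc_mem : ∀ v, c v ∈ Set.Icc (0 : ℝ) 1 := by
    intro v
    simp only [hc]
    split_ifs
    exacts [⟨le_rfl, zero_le_one⟩, ⟨by positivity, min_le_left _ _⟩]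
  have hc_sum : p * ∑ v, c v ≤ p * d * a.choose r / b := by
    have hsum : ∑ v, c v = ∑ v ∈ Zᶜ, min 1 (linkDegree H r Z v / b) := by
      simp only [hc, sum_ite, sum_const_zero, zero_add, compl_eq_univ_sdiff,
        filter_notMem_eq_sdiff]
    calc p * ∑ v, c v ≤ p * (d * a.choose r / b) := by
          rw [hsum]
          exact mul_le_mul_of_nonneg_left (sum_min_one_linkDegree_div_le hdeg hb.le hZ) p.2.1
      _ = p * d * a.choose r / b := by ring
  have hcapped : ∀ X : Finset V, cappedDegreeSum H r X Z b = b * ∑ v ∈ X, c v := by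
    intro X
    simp only [hc, sum_ite, sum_const_zero, zero_add, filter_notMem_eq_sdiff, mul_sum,
      cappedDegreeSum, mul_min_of_nonneg _ _ hb.le, mul_one, mul_div_cancel₀ _ hb.ne']
  have hevent : ∀ X : Finset V,
      (1 + δ) * (p * d * a.choose r) ≤ cappedDegreeSum H r X Z b
        ↔ (1 + δ) * (p * d * a.choose r / b) ≤ ∑ v ∈ X, c v := by
    intro X
    rw [hcapped, ← mul_div_assoc, div_le_iff₀' hb]
  simp only [hevent]
  exact setBernoulli_real_one_add_mul_le_sum_le p hc_mem hδ hc_sum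

lemma setBernoulli_real_exists_le_cappedDegreeSum (a : ℕ) :
    setBer(Set.univ, p).real {s | ∃ Z : Finset V, #Z ≤ a ∧
        (1 + δ) * (p * d * a.choose r) ≤ cappedDegreeSum H r s.toFinset Z b}
      ≤ (Fintype.card V + 1) ^ a
        * Real.exp (-(δ ^ 2 / 4 * (p * d * a.choose r / b))) := by
  set E : Finset V → Set (Set V) := fun Z =>
    {s | (1 + δ) * (p * d * a.choose r) ≤ cappedDegreeSum H r s.toFinset Z b} with hE
  have hunion : {s | ∃ Z : Finset V, #Z ≤ a ∧
      (1 + δ) * (p * d * a.choose r) ≤ cappedDegreeSum H r s.toFinset Z b}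
        = ⋃ Z ∈ ({Z | #Z ≤ a} : Finset (Finset V)), E Z := by
    ext s
    simp [hE]
  rw [hunion]
  calc _ ≤ ∑ Z with #Z ≤ a, setBer(Set.univ, p).real (E Z) :=
        measureReal_biUnion_finset_le _ _
    _ ≤ #{Z : Finset V | #Z ≤ a} • Real.exp (-(δ ^ 2 / 4 * (p * d * a.choose r / b))) :=
        sum_le_card_nsmul _ _ _ fun Z hZ =>
          setBernoulli_real_le_cappedDegreeSum p hdeg hb hδ (mem_filter.1 hZ).2
    _ ≤ _ := by
        rw [nsmul_eq_mul]
        gcongr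
        exact_mod_cast card_filter_card_le a

end CappedDegreeSum

section Existence

open MeasureTheory ProbabilityTheory unitInterval

/-- An upper bound for the probability that a `p`-random set of vertices is unsuitable. The three
terms account for its size, for the overlapping pairs and the triangles that it contains, and for
its capped degree sums at the sets of at most `a` vertices. -/
noncomputable def failureBound (r N d a : ℕ) (p b ε : ℝ) : ℝ :=
  Real.exp (-((ε / 2) ^ 2 / 4 * (p * N)))
    + (2 ^ (r + 1) * (d * p * (p * N) ^ (r - 1)) ^ 2
      + 2 ^ (3 * (r + 1)) * (d * p * (p * N) ^ (r - 1)) ^ 3) / (ε / 2 * (p * N))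
    + (N + 1) ^ a * Real.exp (-(ε ^ 2 / 4 * (p * d * a.choose r / b)))

variable {V : Type*} [Fintype V] [DecidableEq V]

variable {H : Finset (Finset V)} {r d a : ℕ} (hH : ∀ e ∈ H, #e = r + 1)
  (hdeg : maxDegLe r H d) {p : I} {b ε : ℝ} (hb : 0 < b) (hε : ε ∈ Set.Ioc (0 : ℝ) 2)
include hdeg hb hε

lemma exists_finset_card_gt_and_cappedDegreeSum_lt {𝓑 : Finset (Finset V)}
    (hpV : 0 < (p : ℝ) * Fintype.card V)
    (hfail : Real.exp (-((ε / 2) ^ 2 / 4 * (p * Fintype.card V)))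
        + (∑ B ∈ 𝓑, (p : ℝ) ^ #B) / (ε / 2 * (p * Fintype.card V))
        + (Fintype.card V + 1) ^ a * Real.exp (-(ε ^ 2 / 4 * (p * d * a.choose r / b))) < 1) :
    ∃ X : Finset V, (1 - ε / 2) * (p * Fintype.card V) < #X ∧
      #{B ∈ 𝓑 | B ⊆ X} < ε / 2 * (p * Fintype.card V) ∧
      ∀ Z : Finset V, #Z ≤ a →
        cappedDegreeSum H r X Z b < (1 + ε) * (p * d * a.choose r) := by
  obtain ⟨hε₀, hε₂⟩ := hε
  have hsmall := setBernoulli_real_sum_le_one_sub_mul_le p (V := V) (c := 1) (δ := ε / 2)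
    (M := p * Fintype.card V) (fun _ => ⟨zero_le_one, le_rfl⟩) ⟨by linarith, by linarith⟩ (by simp)
  have hbad := setBernoulli_real_le_card_filter_subset p 𝓑
    (show 0 < ε / 2 * (p * Fintype.card V) by positivity)
  have hcapped := setBernoulli_real_exists_le_cappedDegreeSum p hdeg hb ⟨hε₀.le, hε₂⟩ a
  simp only [Pi.one_apply, sum_const, nsmul_eq_mul, mul_one] at hsmall
  obtain ⟨X, hX⟩ := exists_finset_of_setBernoulli_real_lt_one p
    (E := fun X => (#X ≤ (1 - ε / 2) * (p * Fintype.card V) ∨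
      ε / 2 * (p * Fintype.card V) ≤ #{B ∈ 𝓑 | B ⊆ X}) ∨
      ∃ Z : Finset V, #Z ≤ a ∧
        (1 + ε) * (p * d * a.choose r) ≤ cappedDegreeSum H r X Z b) <| by
    refine ((measureReal_union_le _ _).trans (add_le_add ?_ hcapped)).trans_lt hfail
    exact (measureReal_union_le _ _).trans (add_le_add hsmall hbad)
  push Not at hX
  exact ⟨X, hX.1.1, hX.1.2, hX.2⟩

include hH

theorem exists_linear_triangleFree_cappedDegreeSum_le (hr : 2 ≤ r) (hα : indepNum H ≤ a)
    (hpV : 1 ≤ (p : ℝ) * Fintype.card V)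
    (hfail : failureBound r (Fintype.card V) d a p b ε < 1) :
    ∃ Y : Finset V, (1 - ε) * (p * Fintype.card V) ≤ #Y ∧
      Linear (H.filter fun e => e ⊆ Y) ∧ TriangleFree (H.filter fun e => e ⊆ Y) ∧
      ∀ Z ⊆ Y, IsIndep (H.filter fun e => e ⊆ Y) Z →
        cappedDegreeSum (H.filter fun e => e ⊆ Y) r Y Z b ≤ (1 + ε) * (p * d * a.choose r) := by
  set 𝓑 := edgeExtensions H 2 r H ∪ edgeExtensions H 2 r (edgeExtensions H 1 r H)
  have h𝓑 : ∀ B ∈ 𝓑, B.Nonempty := fun B hB => (mem_union.1 hB).elim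
    (nonempty_of_mem_edgeExtensions two_pos) (nonempty_of_mem_edgeExtensions two_pos)
  have hsum : ∑ B ∈ 𝓑, (p : ℝ) ^ #B
      ≤ 2 ^ (r + 1) * (d * p * (p * Fintype.card V) ^ (r - 1)) ^ 2
        + 2 ^ (3 * (r + 1)) * (d * p * (p * Fintype.card V) ^ (r - 1)) ^ 3 :=
    ((le_add_of_nonneg_right (sum_nonneg fun _ _ => pow_nonneg p.2.1 _)).trans_eq
      sum_union_inter).trans <| add_le_add
        (sum_pow_card_edgeExtensions_edges_le hH hdeg p.2.1 hpV hr)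
        (sum_pow_card_edgeExtensions_edgeExtensions_le hH hdeg p.2.1 hpV hr)
  obtain ⟨X, hXcard, hXbad, hXcapped⟩ := exists_finset_card_gt_and_cappedDegreeSum_lt hdeg hb hε
    (𝓑 := 𝓑) (by linarith) <| lt_of_le_of_lt (by
      have := hε.1
      rw [failureBound]
      gcongr) hfail
  obtain ⟨Y, hYX, hYcard, hY𝓑⟩ := exists_subset_forall_not_subset h𝓑 X
  refine ⟨Y, ?_, linear_filter_subset hH fun B hB => hY𝓑 B (mem_union_left _ hB),
    triangleFree_filter_subset hr fun B hB => hY𝓑 B (mem_union_right _ hB), fun Z hZY hZ => ?_⟩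
  · have : (#X : ℝ) ≤ #Y + #{B ∈ 𝓑 | B ⊆ X} := by exact_mod_cast hYcard
    linarith
  · have hZcard : #Z ≤ a := (hZ.of_filter_subset hZY).card_le_indepNum.trans hα
    exact (cappedDegreeSum_mono (filter_subset _ _) hYX hb.le).trans (hXcapped Z hZcard).le

end Existence

section Asymptotics

open Filter Topology
open scoped Nat

lemma pow_le_pow_mul_factorial_mul_choose {r n : ℕ} (hrn : r ≤ n) :
    n ^ r ≤ r ^ r * r ! * n.choose r := by
  have hle : n ^ r ≤ (r * (n + 1 - r)) ^ r := by
    rcases r.eq_zero_or_pos with rfl | hr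
    · simp
    obtain ⟨k, rfl⟩ := Nat.exists_eq_add_of_le hrn
    rw [show r + k + 1 - r = k + 1 by omega]
    gcongr
    nlinarith
  calc n ^ r ≤ r ^ r * (n + 1 - r) ^ r := hle.trans_eq (mul_pow _ _ _)
    _ ≤ r ^ r * n.descFactorial r := Nat.mul_le_mul_left _ (Nat.pow_sub_le_descFactorial n r)
    _ = r ^ r * r ! * n.choose r := by
        rw [Nat.descFactorial_eq_factorial_mul_choose, mul_assoc]

lemma mul_sq_div_le_mul_div {p d A n b a L : ℝ} (hp : 0 ≤ p) (hd : 0 ≤ d) (hA : 0 ≤ A)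
    (hn : 0 ≤ n) (hb : 0 < b) (ha : 0 ≤ a) (hL : 0 ≤ L) :
    p * d ^ 2 * A ^ 2 / ((n * b ^ 2 + d * b * A) * a * L) ≤ p * d * A / (b * a * L) := by
  rcases hd.eq_or_lt with rfl | hd
  · simp
  rcases hA.eq_or_lt with rfl | hA
  · simp
  rcases ha.eq_or_lt with rfl | ha
  · simp
  rcases hL.eq_or_lt with rfl | hL
  · simp
  calc p * d ^ 2 * A ^ 2 / ((n * b ^ 2 + d * b * A) * a * L)
      ≤ p * d ^ 2 * A ^ 2 / (d * b * A * a * L) := by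
        gcongr
        exact le_add_of_nonneg_left (by positivity)
    _ = p * d * A / (b * a * L) := by field_simp

variable {ι : Type*} {l : Filter ι}

lemma tendsto_mul_sq_add_mul_cube_div {Q x : ι → ℝ} (hQ : ∀ i, 0 ≤ Q i)
    (hx : Tendsto x l atTop) (hQx : Tendsto (fun i => Q i ^ 3 / x i) l (𝓝 0)) (A B : ℝ) :
    Tendsto (fun i => (A * Q i ^ 2 + B * Q i ^ 3) / x i) l (𝓝 0) := by
  have hsq : ∀ q : ℝ, 0 ≤ q → q ^ 2 ≤ 1 + q ^ 3 := fun q hq => by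
    nlinarith [mul_nonneg hq (sq_nonneg (q - 1)), sq_nonneg (q - 1)]
  have hQ2 : Tendsto (fun i => Q i ^ 2 / x i) l (𝓝 0) := by
    have hbound : Tendsto (fun i => (x i)⁻¹ + Q i ^ 3 / x i) l (𝓝 0) := by
      simpa using hx.inv_tendsto_atTop.add hQx
    refine squeeze_zero' ?_ ?_ hbound
    · filter_upwards [hx.eventually_ge_atTop 0] with i hi using by positivity
    · filter_upwards [hx.eventually_ge_atTop 0] with i hi
      rw [inv_eq_one_div, ← add_div]
      exact div_le_div_of_nonneg_right (hsq _ (hQ i)) hi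
  simpa only [mul_zero, add_zero, add_div, mul_div_assoc] using
    (hQ2.const_mul A).add (hQx.const_mul B)

lemma add_one_pow_mul_exp_neg_le {N a : ℕ} (hN : 3 ≤ N) (ha : 1 ≤ a) {x : ℝ}
    (hx : 3 * (a * Real.log N) ≤ x) : ((N : ℝ) + 1) ^ a * Real.exp (-x) ≤ (N : ℝ)⁻¹ := by
  have hN' : (3 : ℝ) ≤ N := by exact_mod_cast hN
  have hlog : 0 ≤ Real.log N := Real.log_natCast_nonneg N
  have hpow : ((N : ℝ) + 1) ^ a ≤ Real.exp (2 * (a * Real.log N)) := by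
    calc ((N : ℝ) + 1) ^ a ≤ ((N : ℝ) ^ 2) ^ a := by
          gcongr
          nlinarith
      _ = Real.exp (2 * (a * Real.log N)) := by
          rw [← Real.exp_log (show (0 : ℝ) < N by linarith), ← Real.exp_nat_mul,
            ← Real.exp_nat_mul, Real.log_exp]
          push_cast
          ring_nf
  calc ((N : ℝ) + 1) ^ a * Real.exp (-x)
      ≤ Real.exp (2 * (a * Real.log N)) * Real.exp (-(3 * (a * Real.log N))) := by gcongr
    _ = Real.exp (-(a * Real.log N)) := by
        rw [← Real.exp_add]
        ring_nf
    _ ≤ Real.exp (-Real.log N) := by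
        gcongr
        exact le_mul_of_one_le_left hlog (by exact_mod_cast ha)
    _ = (N : ℝ)⁻¹ := by rw [Real.exp_neg, Real.exp_log (by linarith)]

lemma tendsto_add_one_pow_mul_exp_neg {N a : ι → ℕ} {x : ι → ℝ} (hN : Tendsto N l atTop)
    (ha : ∀ᶠ i in l, 1 ≤ a i)
    (hx : Tendsto (fun i => x i / (a i * Real.log (N i))) l atTop) :
    Tendsto (fun i => ((N i : ℝ) + 1) ^ a i * Real.exp (-x i)) l (𝓝 0) := by
  have hinv : Tendsto (fun i => (N i : ℝ)⁻¹) l (𝓝 0) :=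
    (tendsto_natCast_atTop_atTop.comp hN).inv_tendsto_atTop
  refine squeeze_zero' (.of_forall fun i => by positivity) ?_ hinv
  filter_upwards [hN.eventually_ge_atTop 3, ha, hx.eventually_ge_atTop 3] with i hNi hai hxi
  have hlog : 0 < Real.log (N i) := Real.log_pos (by exact_mod_cast (by omega : 1 < N i))
  have : (0 : ℝ) < a i := by exact_mod_cast hai
  exact add_one_pow_mul_exp_neg_le hNi hai ((le_div_iff₀ (by positivity)).1 hxi)

lemma tendsto_mul_choose_div_atTop {r : ℕ} {a : ι → ℕ} {x y : ι → ℝ} (hx : ∀ i, 0 ≤ x i)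
    (hy : ∀ i, 0 ≤ y i) (hra : ∀ᶠ i in l, r ≤ a i)
    (h : Tendsto (fun i => x i * (a i : ℝ) ^ r / y i) l atTop) :
    Tendsto (fun i => x i * (a i).choose r / y i) l atTop := by
  have hK : (0 : ℝ) < r ^ r * r ! := by
    rcases r.eq_zero_or_pos with rfl | hr
    · simp
    · positivity
  refine tendsto_atTop_mono' l ?_ (h.atTop_div_const hK)
  filter_upwards [hra] with i hi
  have hchoose : (a i : ℝ) ^ r ≤ r ^ r * r ! * (a i).choose r := by
    exact_mod_cast pow_le_pow_mul_factorial_mul_choose hi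
  rw [div_le_iff₀' hK]
  calc x i * (a i : ℝ) ^ r / y i ≤ x i * (r ^ r * r ! * (a i).choose r) / y i := by
        gcongr
        exacts [hy i, hx i]
    _ = r ^ r * r ! * (x i * (a i).choose r / y i) := by ring

lemma tendsto_failureBound {r : ℕ} (hr : 1 ≤ r) {N d a : ι → ℕ} {p b : ι → ℝ}
    (hp : ∀ i, 0 ≤ p i) (hb : ∀ i, 0 ≤ b i) (hN : Tendsto N l atTop)
    (hra : ∀ᶠ i in l, r ≤ a i) (h1 : Tendsto (fun i => p i * N i) l atTop)
    (h2 : Tendsto (fun i => p i * d i * (a i : ℝ) ^ r / (b i * a i * Real.log (N i))) l atTop)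
    (h3 : Tendsto (fun i => (d i : ℝ) ^ 3 * (N i : ℝ) ^ (3 * r - 3) * p i ^ (3 * r) / (p i * N i))
      l (𝓝 0)) {ε : ℝ} (hε : 0 < ε) :
    Tendsto (fun i => failureBound r (N i) (d i) (a i) (p i) (b i) ε) l (𝓝 0) := by
  have hsize : Tendsto (fun i => Real.exp (-((ε / 2) ^ 2 / 4 * (p i * N i)))) l (𝓝 0) :=
    Real.tendsto_exp_neg_atTop_nhds_zero.comp (h1.const_mul_atTop (by positivity))
  have hcube : ∀ i, (d i : ℝ) ^ 3 * (N i : ℝ) ^ (3 * r - 3) * p i ^ (3 * r)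
      = (d i * p i * (p i * N i) ^ (r - 1)) ^ 3 := by
    obtain ⟨k, rfl⟩ := Nat.exists_eq_add_of_le' hr
    intro i
    rw [show 3 * (k + 1) - 3 = 3 * k by omega, Nat.add_sub_cancel]
    ring
  simp only [hcube] at h3
  have hconfig := (tendsto_mul_sq_add_mul_cube_div
    (fun i => mul_nonneg (mul_nonneg (d i).cast_nonneg (hp i))
      (pow_nonneg (mul_nonneg (hp i) (N i).cast_nonneg) _)) h1 h3
    (2 ^ (r + 1)) (2 ^ (3 * (r + 1)))).div_const (ε / 2)
  have hindep := tendsto_add_one_pow_mul_exp_neg hN (hra.mono fun i hi => hr.trans hi)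
    (x := fun i => ε ^ 2 / 4 * (p i * d i * (a i).choose r / b i)) <| by
      have hchoose := tendsto_mul_choose_div_atTop (fun i => mul_nonneg (hp i) (d i).cast_nonneg)
        (fun i => mul_nonneg (mul_nonneg (hb i) (a i).cast_nonneg)
          (Real.log_natCast_nonneg (N i))) hra h2
      refine (hchoose.const_mul_atTop (show 0 < ε ^ 2 / 4 by positivity)).congr fun i => ?_
      rw [mul_assoc (b i), ← div_div, ← mul_div_assoc]
  simp only [← div_mul_eq_div_div_swap, zero_div] at hconfig
  simpa only [failureBound, add_zero] using (hsize.add hconfig).add hindep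

end Asymptotics

theorem stmt17_general {ι : Type*} {l : Filter ι} {V : ι → Type*} [∀ i, Fintype (V i)]
    [∀ i, DecidableEq (V i)] {r : ℕ} (hr : 2 ≤ r) {H : ∀ i, Finset (Finset (V i))}
    {N d a : ι → ℕ} {p b : ι → ℝ}
    (hN : ∀ i, Fintype.card (V i) = N i)
    (hH : ∀ i, ∀ e ∈ H i, #e = r + 1)
    (hdeg : ∀ i, maxDegLe r (H i) (d i))
    (hα : ∀ i, indepNum (H i) ≤ a i)
    (hp : ∀ i, p i ∈ Set.Icc (0 : ℝ) 1)
    (hb : ∀ i, 0 < b i)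
    (h1 : Filter.Tendsto (fun i => p i * N i) l Filter.atTop)
    (h2 : Filter.Tendsto
      (fun i => p i * d i * (a i : ℝ) ^ r / (b i * a i * Real.log (N i))) l Filter.atTop)
    (h3 : Filter.Tendsto
      (fun i => (d i : ℝ) ^ 3 * (N i : ℝ) ^ (3 * r - 3) * p i ^ (3 * r) / (p i * N i)) l (nhds 0))
    {ε : ℝ} (hε : 0 < ε) :
    ∀ᶠ i in l, ∃ Y : Finset (V i),
      (1 - ε) * (p i * N i) ≤ #Y ∧
      Linear ((H i).filter fun e => e ⊆ Y) ∧
      TriangleFree ((H i).filter fun e => e ⊆ Y) ∧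
      ∀ Z ⊆ Y, IsIndep ((H i).filter fun e => e ⊆ Y) Z →
        cappedDegreeSum ((H i).filter fun e => e ⊆ Y) r Y Z (b i)
          ≤ (1 + ε) * p i * d i * (a i).choose r := by
  have hN_top : Filter.Tendsto N l Filter.atTop := tendsto_natCast_atTop_iff.1
    (Filter.tendsto_atTop_mono (fun i => mul_le_of_le_one_left (N i).cast_nonneg (hp i).2) h1)
  have hra : ∀ᶠ i in l, r ≤ a i := (hN_top.eventually_ge_atTop r).mono fun i hi =>
    (le_indepNum (hH i) (hi.trans_eq (hN i).symm)).trans (hα i)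
  have hδ : 0 < min ε 1 := lt_min hε one_pos
  have hfail := tendsto_failureBound (one_le_two.trans hr) (fun i => (hp i).1)
    (fun i => (hb i).le) hN_top hra h1 h2 h3 hδ
  filter_upwards [h1.eventually_ge_atTop 1, hfail.eventually_lt_const one_pos] with i hpN hfail_i
  rw [← hN i] at hpN hfail_i ⊢
  obtain ⟨Y, hYcard, hYlin, hYtri, hYdeg⟩ := exists_linear_triangleFree_cappedDegreeSum_le (hH i)
    (hdeg i) (p := ⟨p i, hp i⟩) (hb i) ⟨hδ, (min_le_right _ _).trans one_le_two⟩ hr (hα i) hpN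
    hfail_i
  obtain ⟨hp₀, -⟩ := hp i
  refine ⟨Y, hYcard.trans' ?_, hYlin, hYtri, fun Z hZY hZ => (hYdeg Z hZY hZ).trans ?_⟩
  · gcongr
    exact min_le_left _ _
  · rw [← mul_assoc, ← mul_assoc]
    gcongr
    exact min_le_left _ _

/-- Lemma 5 of the paper. Given a sequence `H n` of `(r+1)`-graphs on `n`
vertices with maximum `r`-degree at most `d n`, independence number at most `α n ≥ r`,
and parameters `p n ∈ [0,1]`, `b n > 0` satisfying the stated asymptotic conditions,
for every `ε > 0` and all sufficiently large `n` there is a vertex set `Y` with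
`|Y| ≥ (1−ε)·p n·n`, with `H n[Y]` linear and triangle-free, and with
`h(Z, b n) ≤ (1+ε)·p n·d n·C(α n, r)` for every independent set `Z` of `H n[Y]`,
where `h` is computed in `H n[Y]`. -/
theorem stmt17 (r : ℕ) (hr : 2 ≤ r)
    (H : ∀ n : ℕ, Finset (Finset (Fin n)))
    (d a : ℕ → ℕ) (p b : ℕ → ℝ)
    (hH : ∀ n, ∀ e ∈ H n, e.card = r + 1)
    (hdeg : ∀ n, maxDegLe r (H n) (d n))
    (hα : ∀ n, indepNum (H n) ≤ a n)
    (hαr : ∀ n, r ≤ a n)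
    (hp : ∀ n, p n ∈ Set.Icc (0 : ℝ) 1)
    (hb : ∀ n, 0 < b n)
    (h1 : Filter.Tendsto (fun n : ℕ => p n * n) Filter.atTop Filter.atTop)
    (h2 : Filter.Tendsto (fun n : ℕ =>
        (p n * (d n : ℝ) ^ 2 * (a n : ℝ) ^ (2 * r)) /
          (((n : ℝ) * (b n) ^ 2 + (d n : ℝ) * b n * (a n : ℝ) ^ r) * (a n : ℝ) * Real.log n))
      Filter.atTop Filter.atTop)
    (h3 : Filter.Tendsto (fun n : ℕ =>
        ((d n : ℝ) ^ 3 * (n : ℝ) ^ (3 * r - 3) * (p n) ^ (3 * r)) / (p n * n))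
      Filter.atTop (nhds 0)) :
    ∀ ε : ℝ, 0 < ε → ∃ n₀ : ℕ, ∀ n : ℕ, n₀ ≤ n →
      ∃ Y : Finset (Fin n),
        (1 - ε) * (p n * n) ≤ (Y.card : ℝ) ∧
        Linear ((H n).filter (fun e => e ⊆ Y)) ∧
        TriangleFree ((H n).filter (fun e => e ⊆ Y)) ∧
        ∀ Z ⊆ Y, IsIndep ((H n).filter (fun e => e ⊆ Y)) Z →
          (∑ v ∈ Y \ Z,
              min (b n) (((Z.powersetCard r).filter
                (fun e => insert v e ∈ (H n).filter (fun e' => e' ⊆ Y))).card : ℝ))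
            ≤ (1 + ε) * p n * (d n : ℝ) * (Nat.choose (a n) r : ℝ) := by
  intro ε hε
  refine Filter.eventually_atTop.1 <| stmt17_general hr Fintype.card_fin hH hdeg hα hp hb h1
    (Filter.tendsto_atTop_mono (fun n => ?_) h2) h3 hε
  rw [mul_comm 2 r, pow_mul]
  exact mul_sq_div_le_mul_div (hp n).1 (d n).cast_nonneg (by positivity) n.cast_nonneg (hb n)
    (a n).cast_nonneg (Real.log_natCast_nonneg n)
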